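/- arXiv:2207.02018 — 2 statements merged into one kernel-verified Lean document; each statement's English description precedes it below -/
import Mathlib

section
/- Let K be a simplicial complex and let 𝒰 be a cover of K by simplicial subcomplexes such that every finite non-empty intersection of elements of 𝒰 has contractible geometric realization. Then the geometric realization of the nerve of 𝒰 (the simplicial complex with vertex set 𝒰 whose simplices are the finite subsets of 𝒰 with non-empty intersection) is homotopy equivalent to the geometric realization of K. -/
/-! Write `N` for the nerve. Both `|K|` and `|N|` are compared with the subspace
`Z = {(y, x) ∈ |N| × |K| | x ∈ |U i| for every i in the support of y}`.
The fibre of `Z → |N|` over `y` is the realization of a finite intersection of members of the cover,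
contractible by hypothesis; the fibre of `Z → |K|` over `x` is a full simplex on the members
containing the support of `x`, contractible by straight lines. Both projections are instances of
`carrier_homotopyEquiv`: if `A` sends nonempty simplices of a complex `L` to closed contractible
subsets of a space `Y`, reversing inclusions, then
`{(y, x) ∈ |L| × Y | x ∈ A (supp y)} → |L|` is a homotopy equivalence.

The realizations carry the topology of pointwise convergence, which is metrizable and not the weak
one, so maps built skeleton by skeleton need not be continuous. The inverse is instead given by a
formula that is locally finite. With `M` the largest coordinate of `y`, only coordinates above
`M / 3` are seen, and near `y₀` these belong to the support of `y₀`. The superlevel sets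
`{i | a < y i}`, `M / 3 < a < 2 M / 3`, form a chain; `tau σ y` is the length of the set of
levels `a` giving `σ`, scaled so that the longest gets `1`. Choose a contraction of each
`A σ` and run those with `tau σ y ≠ 0` up to time `tau σ y`, from the largest `σ` to the smallest,
starting at a point of `A (supp y)`. As `A` reverses inclusions, the result is defined, and it lies
in `A σ` for the smallest active `σ`. As one contraction is run to the end, the result does
not depend on the starting point, so it is a continuous function `g y` of `y`.

The map `shrink`, which truncates `y` below `2 M / 3`, has support inside every active `σ`. Hence
`y ↦ (shrink y, g y)` is a map into the carrier. It is inverse to the projection up to homotopy: a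
straight line joins `y` to `shrink y`, and slowing all contractions down by a common factor
`s ∈ [0, 1]` deforms `x` to `g y`.
-/

open scoped Classical

/-- An abstract simplicial complex on a vertex type `V`: a set of finite subsets of `V`
(the simplices) closed under inclusions. -/
structure SCpx (V : Type*) where
  faces : Set (Finset V)
  down_closed : ∀ ⦃s t : Finset V⦄, s ∈ faces → t ⊆ s → t ∈ faces

/-- A vertex map `F` is a simplicial map from `K` to `K'` if it maps simplices to simplices. -/
def IsSimplicialMap {V V' : Type*} (K : SCpx V) (K' : SCpx V') (F : V → V') : Prop :=
  ∀ ⦃s : Finset V⦄, s ∈ K.faces → s.image F ∈ K'.faces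

/-- The geometric realization `|K|` of a simplicial complex `K`, realized as the subspace of
`V → ℝ` of barycentric coordinate functions: nonnegative, supported on a simplex, summing to 1. -/
def SCpx.space {V : Type*} (K : SCpx V) : Set (V → ℝ) :=
  {f | (∀ v, 0 ≤ f v) ∧ (∃ s ∈ K.faces, ∀ v, f v ≠ 0 → v ∈ s) ∧ ∑ᶠ v, f v = 1}

/-- The pushforward of barycentric coordinates along a vertex map: the underlying function of
the induced map `|F|` on geometric realizations. -/
noncomputable def pushforward {V V' : Type*} (F : V → V') (f : V → ℝ) : V' → ℝ :=
  fun w => ∑ᶠ v ∈ F ⁻¹' {w}, f v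

/-- `h : |K| → |K'|` is the continuous map induced by the vertex map `F`. -/
def RealizesMap {V V' : Type*} (K : SCpx V) (K' : SCpx V') (F : V → V')
    (h : C(K.space, K'.space)) : Prop :=
  ∀ p : K.space, (h p : V' → ℝ) = pushforward F (p : V → ℝ)

/-- A continuous map is a homotopy equivalence if it has a two-sided homotopy inverse. -/
def IsHomotopyEquivMap {A B : Type*} [TopologicalSpace A] [TopologicalSpace B]
    (f : C(A, B)) : Prop :=
  ∃ g : C(B, A), (f.comp g).Homotopic (ContinuousMap.id B) ∧
    (g.comp f).Homotopic (ContinuousMap.id A)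

/-- The Dowker complex of a relation `R ⊆ X × Y`: simplices are the finite subsets of `X`
witnessed by some `y ∈ Y`. -/
def dowker {X Y : Type*} (R : Set (X × Y)) : SCpx X where
  faces := {σ : Finset X | ∃ y : Y, ∀ x ∈ σ, (x, y) ∈ R}
  down_closed := by
    rintro s t ⟨y, hy⟩ hts
    exact ⟨y, fun x hx => hy x (hts hx)⟩

/-- The rectangle complex of a relation `R ⊆ X × Y`: simplices are the finite subsets `τ` of `R`
with `π_R(τ) × π̂_R(τ) ⊆ R`, i.e. the finite subsets of rectangles contained in `R`. -/
def rect {X Y : Type*} (R : Set (X × Y)) : SCpx (X × Y) where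
  faces := {τ : Finset (X × Y) | ∀ p ∈ τ, ∀ q ∈ τ, (p.1, q.2) ∈ R}
  down_closed := fun _ _ hs hts p hp q hq => hs p (hts hp) q (hts hq)

/-- The transpose relation `R^T ⊆ Y × X` of a relation `R ⊆ X × Y`. -/
def transpose {X Y : Type*} (R : Set (X × Y)) : Set (Y × X) :=
  {q | (q.2, q.1) ∈ R}

/-- The fiber `F/σ = {τ ∈ K | F(τ) ⊆ σ}` of a simplicial map, as a subcomplex of `K`. -/
def fiberCpx {V V' : Type*} (K : SCpx V) (F : V → V') (σ : Finset V') : SCpx V where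
  faces := {t | t ∈ K.faces ∧ t.image F ⊆ σ}
  down_closed := fun _ _ hs hts =>
    ⟨K.down_closed hs.1 hts, (Finset.image_subset_image hts).trans hs.2⟩


/-- The intersection of a finite family of subcomplexes (of a common ambient complex),
as a simplicial complex. -/
def interCpx {ι V : Type*} (U : ι → SCpx V) (s : Finset ι) : SCpx V where
  faces := {t | ∀ i ∈ s, t ∈ (U i).faces}
  down_closed := fun _ _ ha hab i hi => (U i).down_closed (ha i hi) hab

/-- The nerve of a family of subcomplexes: vertices are the members of the family, and
simplices are the finite subfamilies having a common nonempty simplex (i.e. with nonempty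
intersection). -/
def nerveCpx {ι V : Type*} (U : ι → SCpx V) : SCpx ι where
  faces := {s : Finset ι | ∃ t : Finset V, t.Nonempty ∧ ∀ i ∈ s, t ∈ (U i).faces}
  down_closed := by
    rintro s t ⟨w, hw, h⟩ hts
    exact ⟨w, hw, fun i hi => h i (hts hi)⟩

/-! ### Iterated partial contractions along a chain -/

/-- A contraction of a closed contractible set `B`, extended by the identity outside `B` to a family
of self-maps of the ambient space; away from `B` joint continuity is kept only at time `0`. -/
lemma exists_contraction {Y : Type*} [TopologicalSpace Y] (B : Set Y) (hB : IsClosed B)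
    [ContractibleSpace B] :
    ∃ Φ : unitInterval → Y → Y, (∀ x, Φ 0 x = x) ∧ (∀ t, ∀ x ∈ B, Φ t x ∈ B) ∧
      (∀ x ∈ B, ∀ x' ∈ B, Φ 1 x = Φ 1 x') ∧
      ContinuousOn (fun p : unitInterval × Y => Φ p.1 p.2) {p | p.2 ∈ B ∨ p.1 = 0} := by
  obtain ⟨b, ⟨H⟩⟩ := id_nullhomotopic B
  refine ⟨fun t x => if h : x ∈ B then H (t, ⟨x, h⟩) else x, ?_, ?_, ?_, ?_⟩
  · intro x
    by_cases h : x ∈ B <;> simp [h]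
  · intro t x h
    simp [h]
  · intro x h x' h'
    simp [h, h']
  · have : {p : unitInterval × Y | p.2 ∈ B ∨ p.1 = 0} = {p | p.2 ∈ B} ∪ {p | p.1 = 0} := rfl
    rw [this]
    refine ContinuousOn.union_of_isClosed ?_ ?_ (hB.preimage continuous_snd)
      (isClosed_singleton.preimage continuous_fst)
    · rw [continuousOn_iff_continuous_domRestrict]
      have : Continuous fun p : {p : unitInterval × Y | p.2 ∈ B} =>
          ((H (p.1.1, ⟨p.1.2, p.2⟩) : B) : Y) := by fun_prop
      refine this.congr fun p => ?_
      have hp : p.1.2 ∈ B := p.2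
      simp [hp]
    · refine continuousOn_snd.congr fun p hp => ?_
      have hp : p.1 = 0 := hp
      by_cases h : p.2 ∈ B <;> simp [h, hp]

/-- A total order on finite sets extending inclusion. -/
def lext {W : Type*} (a b : Finset W) : Prop := toLinearExtension a ≤ toLinearExtension b

instance {W : Type*} : IsTrans (Finset W) lext := 
  ⟨fun _ _ _ h h' => le_trans (α := LinearExtension (Finset W)) h h'⟩

instance {W : Type*} : Std.Antisymm (lext : Finset W → Finset W → Prop) :=
  ⟨fun _ _ h h' => le_antisymm (α := LinearExtension (Finset W)) h h'⟩

instance {W : Type*} : Std.Total (lext : Finset W → Finset W → Prop) := 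
  ⟨fun _ _ => le_total (α := LinearExtension (Finset W)) _ _⟩

/-- The composite of the maps `Φ σ (t σ)` over the list `l`, the last one being applied first. -/
def chainMap {W Y : Type*} (Φ : Finset W → unitInterval → Y → Y) (t : Finset W → unitInterval)
    (l : List (Finset W)) (x : Y) : Y :=
  l.foldr (fun σ z => Φ σ (t σ) z) x

/-- The active members of the list `l`, those of nonzero time parameter, are increasing. -/
def ActiveSorted {W : Type*} (t : Finset W → unitInterval) (l : List (Finset W)) : Prop :=
  l.Pairwise fun σ ρ => t σ ≠ 0 → t ρ ≠ 0 → σ ⊆ ρ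

section chain

variable {W Y : Type*} {Φ : Finset W → unitInterval → Y → Y} {A : Finset W → Set Y}

lemma chainMap_filter (h0 : ∀ σ x, Φ σ 0 x = x) (t : Finset W → unitInterval)
    (l : List (Finset W)) (x : Y) :
    chainMap Φ t (l.filter fun σ => t σ ≠ 0) x = chainMap Φ t l x := by
  induction l with
  | nil => rfl
  | cons σ l ih =>
    by_cases h : t σ = 0
    · simp only [chainMap, List.foldr_cons, h, h0] at ih ⊢
      simpa [h] using ih
    · simp only [chainMap, List.foldr_cons] at ih ⊢
      simpa [h] using congrArg (Φ σ (t σ)) ih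

/-- Inactive maps may be dropped, so the composite over a finite set of indices in the order `lext`
depends only on the active ones. -/
lemma chainMap_sort_eq (h0 : ∀ σ x, Φ σ 0 x = x) (t : Finset W → unitInterval)
    {F F' : Finset (Finset W)} (hF : ∀ σ, t σ ≠ 0 → σ ∈ F) (hF' : ∀ σ, t σ ≠ 0 → σ ∈ F') (x : Y) :
    chainMap Φ t (F.sort lext) x = chainMap Φ t (F'.sort lext) x := by
  rw [← chainMap_filter h0 t (F.sort lext), ← chainMap_filter h0 t (F'.sort lext)]
  congr 1
  refine List.Perm.eq_of_pairwise' (r := lext) ((F.pairwise_sort lext).filter _)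
    ((F'.pairwise_sort lext).filter _) ?_
  rw [List.perm_ext_iff_of_nodup ((F.sort_nodup lext).filter _) ((F'.sort_nodup lext).filter _)]
  intro σ
  simp only [List.mem_filter, Finset.mem_sort, decide_eq_true_eq]
  exact ⟨fun h => ⟨hF' σ h.2, h.2⟩, fun h => ⟨hF σ h.2, h.2⟩⟩

lemma activeSorted_sort {t : Finset W → unitInterval}
    (ht : ∀ σ ρ, t σ ≠ 0 → t ρ ≠ 0 → σ ⊆ ρ ∨ ρ ⊆ σ) (F : Finset (Finset W)) :
    ActiveSorted t (F.sort lext) := by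
  refine (F.pairwise_sort lext).imp fun {σ ρ} h hσ hρ => ?_
  rcases ht σ ρ hσ hρ with h' | h'
  · exact h'
  · have h2 : lext ρ σ := toLinearExtension.monotone h'
    exact (antisymm_of lext h h2).subset

/-- If all active indices contain `ρ`, then the composite lands in `A ρ`. -/
lemma chainMap_mem (h0 : ∀ σ x, Φ σ 0 x = x) (hA : Antitone A)
    (hmem : ∀ σ t, ∀ x ∈ A σ, Φ σ t x ∈ A σ) {t : Finset W → unitInterval} {x : Y}
    {l : List (Finset W)} (hl : ActiveSorted t l) (hx : ∀ σ ∈ l, t σ ≠ 0 → x ∈ A σ)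
    {ρ : Finset W} (hxρ : x ∈ A ρ) (hρ : ∀ σ ∈ l, t σ ≠ 0 → ρ ⊆ σ) :
    chainMap Φ t l x ∈ A ρ := by
  induction l generalizing ρ with
  | nil => exact hxρ
  | cons σ l ih =>
    obtain ⟨h1, h2⟩ := List.pairwise_cons.1 hl
    have hx' : ∀ σ ∈ l, t σ ≠ 0 → x ∈ A σ := fun τ hτ => hx τ (List.mem_cons_of_mem _ hτ)
    change Φ σ (t σ) (chainMap Φ t l x) ∈ A ρ
    by_cases h : t σ = 0
    · rw [h, h0]
      exact ih h2 hx' hxρ fun τ hτ => hρ τ (List.mem_cons_of_mem _ hτ)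
    · exact hA (hρ σ List.mem_cons_self h) (hmem σ _ _
        (ih h2 hx' (hx σ List.mem_cons_self h) fun τ hτ hn => h1 τ hτ h hn))

/-- A completed contraction in the composite erases the dependence on the starting point. -/
lemma chainMap_eq (h0 : ∀ σ x, Φ σ 0 x = x) (hA : Antitone A)
    (hmem : ∀ σ t, ∀ x ∈ A σ, Φ σ t x ∈ A σ) {t : Finset W → unitInterval} {x x' : Y}
    {l : List (Finset W)} (hl : ActiveSorted t l) (hx : ∀ σ ∈ l, t σ ≠ 0 → x ∈ A σ)
    (hx' : ∀ σ ∈ l, t σ ≠ 0 → x' ∈ A σ) {σ : Finset W} (hσ : σ ∈ l) (hσt : t σ = 1)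
    (h1 : ∀ z ∈ A σ, ∀ z' ∈ A σ, Φ σ 1 z = Φ σ 1 z') :
    chainMap Φ t l x = chainMap Φ t l x' := by
  induction l with
  | nil => simp at hσ
  | cons τ l ih =>
    obtain ⟨hτ, hl'⟩ := List.pairwise_cons.1 hl
    have hxl : ∀ σ ∈ l, t σ ≠ 0 → x ∈ A σ := fun τ hτ => hx τ (List.mem_cons_of_mem _ hτ)
    have hxl' : ∀ σ ∈ l, t σ ≠ 0 → x' ∈ A σ := fun τ hτ => hx' τ (List.mem_cons_of_mem _ hτ)
    change Φ τ (t τ) (chainMap Φ t l x) = Φ τ (t τ) (chainMap Φ t l x')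
    rcases List.mem_cons.1 hσ with rfl | h
    · have hne : t σ ≠ 0 := by simp [hσt]
      rw [hσt]
      exact h1 _ (chainMap_mem h0 hA hmem hl' hxl (hx σ hσ hne) fun ρ hρ h => hτ ρ hρ hne h) _
        (chainMap_mem h0 hA hmem hl' hxl' (hx' σ hσ hne) fun ρ hρ h => hτ ρ hρ hne h)
    · rw [ih hl' hxl hxl' h]

lemma continuousOn_chainMap [TopologicalSpace Y] {P : Type*} [TopologicalSpace P]
    (h0 : ∀ σ x, Φ σ 0 x = x) (hA : Antitone A)
    (hmem : ∀ σ t, ∀ x ∈ A σ, Φ σ t x ∈ A σ)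
    (hc : ∀ σ, ContinuousOn (fun p : unitInterval × Y => Φ σ p.1 p.2)
      {p | p.2 ∈ A σ ∨ p.1 = 0})
    {t : Finset W → P → unitInterval} (ht : ∀ σ, Continuous (t σ)) {x : P → Y} {Q : Set P}
    (hxc : ContinuousOn x Q) {l : List (Finset W)}
    (hl : ∀ p ∈ Q, ActiveSorted (fun σ => t σ p) l)
    (hx : ∀ p ∈ Q, ∀ σ ∈ l, t σ p ≠ 0 → x p ∈ A σ) :
    ContinuousOn (fun p => chainMap Φ (fun σ => t σ p) l (x p)) Q := by
  induction l with
  | nil => exact hxc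
  | cons σ l ih =>
    have hl' : ∀ p ∈ Q, ActiveSorted (fun σ => t σ p) l :=
      fun p hp => (List.pairwise_cons.1 (hl p hp)).2
    have hx' : ∀ p ∈ Q, ∀ σ ∈ l, t σ p ≠ 0 → x p ∈ A σ :=
      fun p hp τ hτ => hx p hp τ (List.mem_cons_of_mem _ hτ)
    refine (hc σ).comp ((ht σ).continuousOn.prodMk (ih hl' hx')) fun p hp => ?_
    by_cases h : t σ p = 0
    · exact Or.inr h
    · exact Or.inl (chainMap_mem h0 hA hmem (hl' p hp) (hx' p hp)
        (hx p hp σ List.mem_cons_self h)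
        fun τ hτ h' => (List.pairwise_cons.1 (hl p hp)).1 τ hτ h h')

end chain

/-! ### Points of the geometric realization -/

/-- The support of a point of `|L|` as a finset; it is the unique simplex of `L` whose relative
interior contains the point. -/
noncomputable def fsupp {W : Type*} {L : SCpx W} (y : L.space) : Finset W :=
  Set.Finite.toFinset (s := Function.support y.1) (by
    obtain ⟨s, -, hs⟩ := y.2.2.1
    exact s.finite_toSet.subset fun v hv => hs v hv)

section points

variable {W : Type*} {L : SCpx W}

lemma mem_fsupp {y : L.space} {i : W} : i ∈ fsupp y ↔ y.1 i ≠ 0 := by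
  simp [fsupp]

lemma notMem_fsupp {y : L.space} {i : W} : i ∉ fsupp y ↔ y.1 i = 0 := by
  simp [mem_fsupp]

lemma space_nonneg (y : L.space) (i : W) : 0 ≤ y.1 i := y.2.1 i

lemma fsupp_mem_faces (y : L.space) : fsupp y ∈ L.faces := by
  obtain ⟨s, hs, hs'⟩ := y.2.2.1
  exact L.down_closed hs fun v hv => hs' v (mem_fsupp.1 hv)

lemma sum_fsupp (y : L.space) : ∑ i ∈ fsupp y, y.1 i = 1 := by
  rw [← y.2.2.2]
  exact (finsum_eq_sum_of_support_subset _ fun i hi => Finset.mem_coe.2 (mem_fsupp.2 hi)).symm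

lemma fsupp_nonempty (y : L.space) : (fsupp y).Nonempty := by
  by_contra h
  have := sum_fsupp y
  simp [Finset.not_nonempty_iff_eq_empty.1 h] at this

lemma sum_le_one (y : L.space) (F : Finset W) : ∑ i ∈ F, y.1 i ≤ 1 := by
  rw [← sum_fsupp y, Finset.sum_subset (Finset.subset_union_right (s₁ := F) (s₂ := fsupp y))
    fun i _ hi => notMem_fsupp.1 hi]
  exact Finset.sum_le_sum_of_subset_of_nonneg Finset.subset_union_left
    fun i _ _ => space_nonneg y i

lemma le_one (y : L.space) (i : W) : y.1 i ≤ 1 := by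
  simpa using sum_le_one y {i}

lemma mem_space_of {f : W → ℝ} {s : Finset W} (hs : s ∈ L.faces) (h0 : ∀ i, 0 ≤ f i)
    (hf : ∀ i, f i ≠ 0 → i ∈ s) (h1 : ∑ i ∈ s, f i = 1) : f ∈ L.space :=
  ⟨h0, ⟨s, hs, hf⟩, by
    rw [← h1]
    exact finsum_eq_sum_of_support_subset _ fun i hi => Finset.mem_coe.2 (hf i hi)⟩

@[fun_prop]
lemma continuous_coord (i : W) : Continuous fun y : L.space => y.1 i :=
  (continuous_apply i).comp continuous_subtype_val

/-- The topology of pointwise convergence on `|L|` is that of uniform convergence: since the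
coordinates in the support of `y₀` already add up to almost `1` near `y₀`, all the other
coordinates are small there. -/
lemma eventually_unif (y₀ : L.space) {ε : ℝ} (hε : 0 < ε) :
    ∀ᶠ y : L.space in nhds y₀, ∀ i, |y.1 i - y₀.1 i| < ε := by
  have h1 : ∀ᶠ y : L.space in nhds y₀, 1 - ε < ∑ i ∈ fsupp y₀, y.1 i := by
    have : Continuous fun y : L.space => ∑ i ∈ fsupp y₀, y.1 i := by fun_prop
    refine this.continuousAt.eventually_const_lt ?_
    simp only [sum_fsupp]
    linarith
  have h2 : ∀ᶠ y : L.space in nhds y₀, ∀ i ∈ fsupp y₀, |y.1 i - y₀.1 i| < ε := by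
    rw [Filter.eventually_all_finset]
    intro i _
    have : Continuous fun y : L.space => |y.1 i - y₀.1 i| := by fun_prop
    exact this.continuousAt.eventually_lt_const (by simpa using hε)
  filter_upwards [h1, h2] with y hy1 hy2 i
  by_cases hi : i ∈ fsupp y₀
  · exact hy2 i hi
  · have := sum_le_one y (insert i (fsupp y₀))
    rw [Finset.sum_insert hi] at this
    rw [notMem_fsupp.1 hi, sub_zero, abs_of_nonneg (space_nonneg y i)]
    linarith

/-- The segment between two points of a common simplex stays in `|L|`, whence straight-line
homotopies. -/
lemma segment_mem (y y' : L.space) {s : Finset W} (hs : s ∈ L.faces) (h : fsupp y ⊆ s)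
    (h' : fsupp y' ⊆ s) (t : unitInterval) :
    (fun i => (1 - (t : ℝ)) * y.1 i + t * y'.1 i) ∈ L.space := by
  refine mem_space_of hs (fun i => ?_) (fun i hi => ?_) ?_
  · exact add_nonneg (mul_nonneg (by linarith [t.2.2]) (space_nonneg y i))
      (mul_nonneg t.2.1 (space_nonneg y' i))
  · by_contra hi'
    apply hi
    rw [notMem_fsupp.1 fun hh => hi' (h hh), notMem_fsupp.1 fun hh => hi' (h' hh)]
    simp
  · rw [Finset.sum_add_distrib, ← Finset.mul_sum, ← Finset.mul_sum,
      ← Finset.sum_subset h fun i _ hi => notMem_fsupp.1 hi,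
      ← Finset.sum_subset h' fun i _ hi => notMem_fsupp.1 hi, sum_fsupp, sum_fsupp]
    ring

end points

/-! ### Suprema of families of continuous functions -/

lemma continuous_iSup_of_unif {X J : Type*} [TopologicalSpace X] (g : J → X → ℝ)
    (hb : ∀ x, BddAbove (Set.range fun j => g j x))
    (h : ∀ x₀, ∀ ε > 0, ∀ᶠ x in nhds x₀, ∀ j, |g j x - g j x₀| < ε) :
    Continuous fun x => ⨆ j, g j x := by
  rcases isEmpty_or_nonempty J with hJ | hJ
  · simpa using continuous_const
  rw [continuous_iff_continuousAt]
  intro x₀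
  rw [ContinuousAt, Metric.tendsto_nhds]
  intro ε hε
  filter_upwards [h x₀ (ε / 2) (by linarith)] with x hx
  rw [Real.dist_eq]
  have h1 : ⨆ j, g j x ≤ (⨆ j, g j x₀) + ε / 2 := ciSup_le fun j => by
    have := le_ciSup (hb x₀) j
    have := abs_lt.1 (hx j)
    linarith
  have h2 : ⨆ j, g j x₀ ≤ (⨆ j, g j x) + ε / 2 := ciSup_le fun j => by
    have := le_ciSup (hb x) j
    have := abs_lt.1 (hx j)
    linarith
  rw [abs_lt]
  constructor <;> linarith

lemma continuous_iSup_of_locallyFinite {X J : Type*} [TopologicalSpace X] (g : J → X → ℝ)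
    (hb : ∀ x, BddAbove (Set.range fun j => g j x)) (hc : ∀ j, Continuous (g j))
    (h : ∀ x₀, ∃ F : Finset J, ∀ᶠ x in nhds x₀, ∀ j ∉ F, g j x = 0) :
    Continuous fun x => ⨆ j, g j x := by
  refine continuous_iSup_of_unif g hb fun x₀ ε hε => ?_
  obtain ⟨F, hF⟩ := h x₀
  have h2 : ∀ᶠ x in nhds x₀, ∀ j ∈ F, |g j x - g j x₀| < ε := by
    rw [Filter.eventually_all_finset]
    intro j _
    have : Continuous fun x => |g j x - g j x₀| := ((hc j).sub continuous_const).abs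
    exact this.continuousAt.eventually_lt_const (by simpa using hε)
  filter_upwards [hF, h2] with x hx hx2 j
  by_cases hj : j ∈ F
  · exact hx2 j hj
  · rw [hx j hj, hF.self_of_nhds j hj]
    simpa using hε

/-! ### Locally finite flags of superlevel sets -/

/-- The largest barycentric coordinate. -/
noncomputable def peak {W : Type*} {L : SCpx W} (y : L.space) : ℝ := ⨆ i, y.1 i

/-- The `i`-th coordinate clipped to `[peak / 3, 2 * peak / 3]` and shifted to start at `0`. -/
noncomputable def hgt {W : Type*} {L : SCpx W} (i : W) (y : L.space) : ℝ :=
  max 0 (min (y.1 i) (2 / 3 * peak y) - 1 / 3 * peak y)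

/-- The largest clipped coordinate outside `σ`. -/
noncomputable def outer {W : Type*} {L : SCpx W} (σ : Finset W) (y : L.space) : ℝ :=
  ⨆ i, if i ∈ σ then 0 else hgt i y

/-- The length of the set of levels `a` between `peak / 3` and `2 * peak / 3` for which `σ` is the
superlevel set `{i | a < y i}`. -/
noncomputable def levelLen {W : Type*} {L : SCpx W} (σ : Finset W) (y : L.space) : ℝ :=
  if h : σ.Nonempty then max 0 (σ.inf' h (fun i => hgt i y) - outer σ y) else 0

/-- The greatest of the lengths `levelLen σ y`. -/
noncomputable def topLen {W : Type*} {L : SCpx W} (y : L.space) : ℝ := ⨆ σ, levelLen σ y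

section flags

variable {W : Type*} {L : SCpx W}

lemma bddAbove_coord (y : L.space) : BddAbove (Set.range fun i => y.1 i) :=
  ⟨1, by rintro _ ⟨i, rfl⟩; exact le_one y i⟩

lemma le_peak (y : L.space) (i : W) : y.1 i ≤ peak y := le_ciSup (bddAbove_coord y) i

lemma peak_pos (y : L.space) : 0 < peak y := by
  obtain ⟨i, hi⟩ := fsupp_nonempty y
  exact ((space_nonneg y i).lt_of_ne' (mem_fsupp.1 hi)).trans_le (le_peak y i)

lemma exists_lt_coord (y : L.space) {c : ℝ} (hc : c < peak y) : ∃ i, c < y.1 i := by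
  obtain ⟨i, _⟩ := fsupp_nonempty y
  have : Nonempty W := ⟨i⟩
  exact exists_lt_of_lt_ciSup hc

lemma continuous_peak : Continuous (peak : L.space → ℝ) :=
  continuous_iSup_of_unif _ bddAbove_coord fun y₀ _ hε => eventually_unif y₀ hε

/-- Only finitely many coordinates reach the threshold `peak / 3`, locally uniformly. -/
lemma eventually_mem_fsupp (y₀ : L.space) :
    ∀ᶠ y : L.space in nhds y₀, ∀ i, 1 / 3 * peak y < y.1 i → i ∈ fsupp y₀ := by
  have hp := peak_pos y₀
  have h1 : ∀ᶠ y : L.space in nhds y₀, 1 / 2 * peak y₀ < peak y :=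
    continuous_peak.continuousAt.eventually_const_lt (by linarith)
  filter_upwards [h1, eventually_unif y₀ (show 0 < peak y₀ / 6 by linarith)] with y hy hy' i hi
  by_contra hi'
  have := hy' i
  rw [notMem_fsupp.1 hi', sub_zero, abs_of_nonneg (space_nonneg y i)] at this
  linarith

lemma hgt_nonneg (i : W) (y : L.space) : 0 ≤ hgt i y := le_max_left _ _

lemma hgt_pos_iff {i : W} {y : L.space} : 0 < hgt i y ↔ 1 / 3 * peak y < y.1 i := by
  have := peak_pos y
  simp only [hgt, lt_max_iff, lt_irrefl, false_or, sub_pos, lt_min_iff, and_iff_left_iff_imp]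
  intro
  linarith

lemma hgt_le (i : W) (y : L.space) : hgt i y ≤ 1 / 3 * peak y := by
  have := peak_pos y
  refine max_le (by linarith) ?_
  have := min_le_right (y.1 i) (2 / 3 * peak y)
  linarith

lemma hgt_eq {i : W} {y : L.space} (h : 2 / 3 * peak y < y.1 i) : hgt i y = 1 / 3 * peak y := by
  have := peak_pos y
  rw [hgt, min_eq_right h.le, max_eq_right] <;> linarith

lemma continuous_hgt (i : W) : Continuous fun y : L.space => hgt i y := by
  have := continuous_peak (L := L)
  unfold hgt
  fun_prop

lemma bddAbove_outer (σ : Finset W) (y : L.space) :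
    BddAbove (Set.range fun i => if i ∈ σ then 0 else hgt i y) :=
  ⟨1 / 3 * peak y, by
    rintro _ ⟨i, rfl⟩
    have := peak_pos y
    dsimp only
    split_ifs
    · linarith
    · exact hgt_le i y⟩

lemma hgt_le_outer {σ : Finset W} (y : L.space) {i : W} (hi : i ∉ σ) : hgt i y ≤ outer σ y := by
  unfold outer
  simpa [hi] using le_ciSup (bddAbove_outer σ y) i

lemma outer_nonneg (σ : Finset W) (y : L.space) : 0 ≤ outer σ y :=
  Real.iSup_nonneg fun i => by
    split_ifs
    · rfl
    · exact hgt_nonneg i y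

lemma continuous_outer (σ : Finset W) : Continuous fun y : L.space => outer σ y := by
  refine continuous_iSup_of_locallyFinite _ (bddAbove_outer σ) (fun i => ?_) fun y₀ =>
    ⟨fsupp y₀, ?_⟩
  · by_cases h : i ∈ σ
    · simpa [h] using continuous_const
    · simpa [h] using continuous_hgt i
  · filter_upwards [eventually_mem_fsupp y₀] with y hy i hi
    split_ifs
    · rfl
    · exact le_antisymm (not_lt.1 fun h => hi (hy i (hgt_pos_iff.1 h))) (hgt_nonneg i y)

lemma levelLen_nonneg (σ : Finset W) (y : L.space) : 0 ≤ levelLen σ y := by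
  unfold levelLen
  split_ifs
  · exact le_max_left _ _
  · rfl

lemma levelLen_pos_iff {σ : Finset W} {y : L.space} :
    0 < levelLen σ y ↔ σ.Nonempty ∧ ∀ i ∈ σ, outer σ y < hgt i y := by
  unfold levelLen
  split_ifs with h
  · simp [h]
  · simp [h]

lemma levelLen_le (σ : Finset W) (y : L.space) : levelLen σ y ≤ peak y := by
  have hp := peak_pos y
  unfold levelLen
  split_ifs with h
  · refine max_le hp.le ?_
    obtain ⟨i, hi⟩ := id h
    have h1 := Finset.inf'_le (fun i => hgt i y) hi
    have h2 := hgt_le i y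
    have h3 := outer_nonneg σ y
    linarith
  · exact hp.le

lemma continuous_levelLen (σ : Finset W) : Continuous fun y : L.space => levelLen σ y := by
  unfold levelLen
  split_ifs with h
  · exact continuous_const.max
      ((Continuous.finset_inf'_apply h fun i _ => continuous_hgt i).sub (continuous_outer σ))
  · exact continuous_const

/-- Superlevel sets form a chain. -/
lemma levelLen_chain {σ ρ : Finset W} {y : L.space} (hσ : 0 < levelLen σ y)
    (hρ : 0 < levelLen ρ y) : σ ⊆ ρ ∨ ρ ⊆ σ := by
  by_contra! h
  obtain ⟨i, hi, hi'⟩ := Finset.not_subset.1 h.1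
  obtain ⟨j, hj, hj'⟩ := Finset.not_subset.1 h.2
  have h1 := (levelLen_pos_iff.1 hσ).2 i hi
  have h2 := (levelLen_pos_iff.1 hρ).2 j hj
  have h3 := hgt_le_outer y hi'
  have h4 := hgt_le_outer y hj'
  linarith

lemma eventually_levelLen (y₀ : L.space) :
    ∀ᶠ y : L.space in nhds y₀, ∀ σ, 0 < levelLen σ y → σ ⊆ fsupp y₀ := by
  filter_upwards [eventually_mem_fsupp y₀] with y hy σ hσ i hi
  exact hy i (hgt_pos_iff.1 ((outer_nonneg σ y).trans_lt ((levelLen_pos_iff.1 hσ).2 i hi)))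

lemma bddAbove_levelLen (y : L.space) : BddAbove (Set.range fun σ => levelLen σ y) :=
  ⟨peak y, by rintro _ ⟨σ, rfl⟩; exact levelLen_le σ y⟩

lemma levelLen_le_topLen (σ : Finset W) (y : L.space) : levelLen σ y ≤ topLen y :=
  le_ciSup (bddAbove_levelLen y) σ

lemma continuous_topLen : Continuous (topLen : L.space → ℝ) := by
  refine continuous_iSup_of_locallyFinite _ bddAbove_levelLen continuous_levelLen fun y₀ =>
    ⟨(fsupp y₀).powerset, ?_⟩
  filter_upwards [eventually_levelLen y₀] with y hy σ hσ
  exact le_antisymm (not_lt.1 fun h => hσ (Finset.mem_powerset.2 (hy σ h))) (levelLen_nonneg σ y)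

/-- The superlevel set at `peak / 3` has positive length. -/
lemma topLen_pos (y : L.space) : 0 < topLen y := by
  have hp := peak_pos y
  let σ := (fsupp y).filter fun i => 1 / 3 * peak y < y.1 i
  have hmem : ∀ i, i ∈ σ ↔ 0 < hgt i y := fun i => by
    rw [hgt_pos_iff, Finset.mem_filter, and_iff_right_iff_imp]
    exact fun h => eventually_mem_fsupp y |>.self_of_nhds i h
  refine lt_of_lt_of_le (levelLen_pos_iff.2 ⟨?_, fun i hi => ?_⟩) (levelLen_le_topLen σ y)
  · obtain ⟨i, hi⟩ := exists_lt_coord y (show 1 / 3 * peak y < peak y by linarith)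
    exact ⟨i, (hmem i).2 (hgt_pos_iff.2 hi)⟩
  · refine lt_of_le_of_lt (Real.iSup_le (fun j => ?_) le_rfl) ((hmem i).1 hi)
    split_ifs with hj
    · rfl
    · exact not_lt.1 fun h => hj ((hmem j).2 h)

lemma exists_levelLen_eq (y : L.space) : ∃ σ, levelLen σ y = topLen y := by
  obtain ⟨σ, -, hσ⟩ := Finset.exists_max_image (fsupp y).powerset (fun σ => levelLen σ y)
    ⟨∅, by simp⟩
  refine ⟨σ, le_antisymm (levelLen_le_topLen σ y) (ciSup_le fun ρ => ?_)⟩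
  by_cases h : 0 < levelLen ρ y
  · exact hσ ρ (Finset.mem_powerset.2 ((eventually_levelLen y).self_of_nhds ρ h))
  · exact (not_lt.1 h).trans (levelLen_nonneg σ y)

/-- The level length of `σ` normalized so that the longest one becomes `1`. -/
noncomputable def tau (σ : Finset W) (y : L.space) : unitInterval :=
  ⟨levelLen σ y / topLen y, div_nonneg (levelLen_nonneg σ y) (topLen_pos y).le,
    div_le_one_of_le₀ (levelLen_le_topLen σ y) (topLen_pos y).le⟩

lemma continuous_tau (σ : Finset W) : Continuous fun y : L.space => tau σ y :=
  ((continuous_levelLen σ).div continuous_topLen fun y => (topLen_pos y).ne').subtype_mk _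

lemma levelLen_pos_of_tau {σ : Finset W} {y : L.space} (h : tau σ y ≠ 0) : 0 < levelLen σ y := by
  refine (levelLen_nonneg σ y).lt_of_ne' fun h' => h (Subtype.ext ?_)
  simp [tau, h']

lemma exists_tau_eq_one (y : L.space) : ∃ σ, tau σ y = 1 := by
  obtain ⟨σ, h⟩ := exists_levelLen_eq y
  refine ⟨σ, Subtype.ext ?_⟩
  simp [tau, (topLen_pos y).ne', h]

/-- The part of the `i`-th coordinate above the level `2 * peak / 3`. -/
noncomputable def excess (y : L.space) (i : W) : ℝ := max 0 (y.1 i - 2 / 3 * peak y)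

lemma excess_nonneg (y : L.space) (i : W) : 0 ≤ excess y i := le_max_left _ _

lemma lt_of_excess_ne {y : L.space} {i : W} (h : excess y i ≠ 0) : 2 / 3 * peak y < y.1 i := by
  by_contra! h'
  exact h (max_eq_left (by linarith))

lemma mem_fsupp_of_excess {y : L.space} {i : W} (h : excess y i ≠ 0) : i ∈ fsupp y := by
  have := lt_of_excess_ne h
  have := peak_pos y
  exact mem_fsupp.2 (by linarith)

lemma sum_excess_pos (y : L.space) : 0 < ∑ i ∈ fsupp y, excess y i := by
  have hp := peak_pos y
  obtain ⟨i, hi⟩ := exists_lt_coord y (show 2 / 3 * peak y < peak y by linarith)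
  refine Finset.sum_pos' (fun i _ => excess_nonneg y i) ⟨i, mem_fsupp.2 (by linarith), ?_⟩
  exact lt_max_of_lt_right (by linarith)

/-- Near `y₀` the total excess may be summed over the support of `y₀`. -/
lemma eventually_sum_excess (y₀ : L.space) : ∀ᶠ y : L.space in nhds y₀,
    ∑ i ∈ fsupp y, excess y i = ∑ i ∈ fsupp y₀, excess y i := by
  filter_upwards [eventually_mem_fsupp y₀] with y hy
  have h0 : ∀ i ∉ fsupp y, excess y i = 0 := fun i hi =>
    by_contra fun h => hi (mem_fsupp_of_excess h)
  have h1 : ∀ i ∉ fsupp y₀, excess y i = 0 := fun i hi => by_contra fun h => hi (hy i (by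
    have := lt_of_excess_ne h
    have := peak_pos y
    linarith))
  rw [Finset.sum_subset (Finset.subset_union_left (s₁ := fsupp y) (s₂ := fsupp y₀))
      fun i _ hi => h0 i hi,
    Finset.sum_subset (Finset.subset_union_right (s₁ := fsupp y) (s₂ := fsupp y₀))
      fun i _ hi => h1 i hi]

/-- The self-map of `|L|` that truncates a point to its coordinates above `2 * peak / 3`. -/
noncomputable def shrink : C(L.space, L.space) where
  toFun y := ⟨fun i => excess y i / ∑ j ∈ fsupp y, excess y j,
    mem_space_of (fsupp_mem_faces y)
      (fun i => div_nonneg (excess_nonneg y i) (sum_excess_pos y).le)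
      (fun i hi => mem_fsupp_of_excess fun h => hi (by simp [h]))
      (by rw [← Finset.sum_div, div_self (sum_excess_pos y).ne'])⟩
  continuous_toFun := by
    have he : ∀ i, Continuous fun y : L.space => excess y i := fun i => by
      have := continuous_peak (L := L)
      unfold excess
      fun_prop
    refine Continuous.subtype_mk (continuous_pi fun i => (he i).div ?_
      fun y => (sum_excess_pos y).ne') _
    rw [continuous_iff_continuousAt]
    intro y₀
    have : Continuous fun y : L.space => ∑ i ∈ fsupp y₀, excess y i :=
      continuous_finsetSum _ fun i _ => he i
    exact this.continuousAt.congr ((eventually_sum_excess y₀).mono fun y hy => hy.symm)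

lemma lt_of_mem_fsupp_shrink {y : L.space} {i : W} (hi : i ∈ fsupp (shrink y)) :
    2 / 3 * peak y < y.1 i :=
  lt_of_excess_ne fun h => mem_fsupp.1 hi (by simp [shrink, h])

lemma fsupp_shrink_subset (y : L.space) : fsupp (shrink y) ⊆ fsupp y := fun i hi => by
  have := lt_of_mem_fsupp_shrink hi
  have := peak_pos y
  exact mem_fsupp.2 (by linarith)

/-- The coordinates kept by `shrink` belong to every active superlevel set, since these are taken
at levels below `2 * peak / 3`. -/
lemma fsupp_shrink_subset_of_tau {y : L.space} {σ : Finset W} (h : tau σ y ≠ 0) :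
    fsupp (shrink y) ⊆ σ := fun i hi => by
  by_contra hi'
  obtain ⟨⟨j, hj⟩, h2⟩ := levelLen_pos_iff.1 (levelLen_pos_of_tau h)
  have h3 := h2 j hj
  have h4 := hgt_le_outer y hi'
  rw [hgt_eq (lt_of_mem_fsupp_shrink hi)] at h4
  linarith [hgt_le j y]

end flags

/-! ### The fiberwise contractible projection -/

/-- The points `(y, x)` of `|L| × Y` such that `x` lies in the set attached to the open simplex
of `y`. -/
def Carrier {W Y : Type*} (L : SCpx W) (A : Finset W → Set Y) : Set (L.space × Y) :=
  {p | p.2 ∈ A (fsupp p.1)}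

section fiber

variable {W Y : Type*} [TopologicalSpace Y] {L : SCpx W} {A : Finset W → Set Y}

/-- If `A` assigns closed contractible sets to the nonempty simplices of `L`, decreasingly, then the
projection of the carrier to `|L|` is a homotopy equivalence. Its inverse sends `y` to
`(shrink y, g y)`, where `g y` is the result of running the partial contractions of the sets `A σ`,
with time parameters `tau σ y`, along the chain of active `σ`. -/
theorem carrier_homotopyEquiv (hA : Antitone A)
    (hcl : ∀ σ ∈ L.faces, σ.Nonempty → IsClosed (A σ))
    (hcontr : ∀ σ ∈ L.faces, σ.Nonempty → ContractibleSpace (A σ)) :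
    Nonempty (ContinuousMap.HomotopyEquiv (Carrier L A) L.space) := by
  have hΦ : ∀ σ, ∃ Φ : unitInterval → Y → Y, (∀ x, Φ 0 x = x) ∧ (∀ t, ∀ x ∈ A σ, Φ t x ∈ A σ) ∧
      ((σ ∈ L.faces ∧ σ.Nonempty) → ∀ x ∈ A σ, ∀ x' ∈ A σ, Φ 1 x = Φ 1 x') ∧
      ContinuousOn (fun p : unitInterval × Y => Φ p.1 p.2) {p | p.2 ∈ A σ ∨ p.1 = 0} := by
    intro σ
    by_cases h : σ ∈ L.faces ∧ σ.Nonempty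
    · have := hcontr σ h.1 h.2
      obtain ⟨Φ, h0, h1, h2, h3⟩ := exists_contraction (A σ) (hcl σ h.1 h.2)
      exact ⟨Φ, h0, h1, fun _ => h2, h3⟩
    · exact ⟨fun _ x => x, fun _ => rfl, fun _ _ hx => hx, fun h' => absurd h' h,
        continuousOn_snd⟩
  choose Φ h0 hmem h1 hc using hΦ
  have hsub : ∀ (y : L.space) σ, tau σ y ≠ 0 → σ ⊆ fsupp y := fun y σ h =>
    (eventually_levelLen y).self_of_nhds σ (levelLen_pos_of_tau h)
  have hchain : ∀ (y : L.space) σ ρ, tau σ y ≠ 0 → tau ρ y ≠ 0 → σ ⊆ ρ ∨ ρ ⊆ σ :=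
    fun y σ ρ h h' => levelLen_chain (levelLen_pos_of_tau h) (levelLen_pos_of_tau h')
  have hmul : ∀ (s : unitInterval) (y : L.space) σ, s * tau σ y ≠ 0 → tau σ y ≠ 0 :=
    fun s y σ h => right_ne_zero_of_mul h
  -- the contraction process over a finite set `F` of indices, slowed down by the factor `s`
  let G : Finset (Finset W) → unitInterval → L.space → Y → Y := fun F s y x =>
    chainMap Φ (fun σ => s * tau σ y) (F.sort lext) x
  have hsorted : ∀ (F : Finset (Finset W)) (s : unitInterval) (y : L.space),
      ActiveSorted (fun σ => s * tau σ y) (F.sort lext) := fun F s y =>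
    activeSorted_sort (fun σ ρ h h' => hchain y σ ρ (hmul s y σ h) (hmul s y ρ h')) F
  have hGF : ∀ (y : L.space) (F : Finset (Finset W)), (∀ σ, tau σ y ≠ 0 → σ ∈ F) → ∀ s x,
      G F s y x = G (fsupp y).powerset s y x := fun y F hF s x =>
    chainMap_sort_eq h0 _ (fun σ h => hF σ (hmul s y σ h))
      (fun σ h => Finset.mem_powerset.2 (hsub y σ (hmul s y σ h))) x
  have hGmem : ∀ F s (y : L.space), ∀ x ∈ A (fsupp y), G F s y x ∈ A (fsupp (shrink y)) :=
    fun F s y x hx => chainMap_mem h0 hA hmem (hsorted F s y)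
      (fun σ _ h => hA (hsub y σ (hmul s y σ h)) hx) (hA (fsupp_shrink_subset y) hx)
      fun σ _ h => fsupp_shrink_subset_of_tau (hmul s y σ h)
  have hG0 : ∀ F (y : L.space) x, G F 0 y x = x := fun F y x => by
    change chainMap Φ (fun σ => 0 * tau σ y) (F.sort lext) x = x
    simp only [zero_mul]
    rw [← chainMap_filter h0]
    simp [chainMap]
  have hG1 : ∀ F (y : L.space), (∀ σ, tau σ y ≠ 0 → σ ∈ F) → ∀ x x',
      (∀ σ, tau σ y ≠ 0 → x ∈ A σ) → (∀ σ, tau σ y ≠ 0 → x' ∈ A σ) → G F 1 y x = G F 1 y x' := by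
    intro F y hF x x' hx hx'
    obtain ⟨σ, hσ⟩ := exists_tau_eq_one y
    have hne : tau σ y ≠ 0 := by simp [hσ]
    refine chainMap_eq (σ := σ) h0 hA hmem (hsorted F 1 y) (fun σ _ h => hx σ (hmul 1 y σ h))
      (fun σ _ h => hx' σ (hmul 1 y σ h)) ((Finset.mem_sort _).2 (hF σ hne)) (by simp [hσ])
      (h1 σ ⟨L.down_closed (fsupp_mem_faces y) (hsub y σ hne), ?_⟩)
    exact (levelLen_pos_iff.1 (levelLen_pos_of_tau hne)).1
  have hev : ∀ y₀ : L.space, ∀ᶠ y in nhds y₀, ∀ σ, tau σ y ≠ 0 → σ ⊆ fsupp y₀ := fun y₀ =>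
    (eventually_levelLen y₀).mono fun y hy σ h => hy σ (levelLen_pos_of_tau h)
  have hne : ∀ y : L.space, ∃ x, x ∈ A (fsupp y) := fun y => by
    have := hcontr _ (fsupp_mem_faces y) (fsupp_nonempty y)
    obtain ⟨x⟩ : Nonempty (A (fsupp y)) := inferInstance
    exact ⟨x.1, x.2⟩
  choose base hbase using hne
  let g : L.space → Y := fun y => G (fsupp y).powerset 1 y (base y)
  have hg_eq : ∀ (y : L.space), ∀ x ∈ A (fsupp y), G (fsupp y).powerset 1 y x = g y :=
    fun y x hx => hG1 _ y (fun σ h => Finset.mem_powerset.2 (hsub y σ h)) _ _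
      (fun σ h => hA (hsub y σ h) hx) (fun σ h => hA (hsub y σ h) (hbase y))
  -- near `y₀`, the process may be started at the fixed point `base y₀`
  have hgc : Continuous g := by
    rw [continuous_iff_continuousAt]
    intro y₀
    have hc' : ContinuousOn (fun y => G (fsupp y₀).powerset 1 y (base y₀))
        {y | ∀ σ, tau σ y ≠ 0 → σ ⊆ fsupp y₀} :=
      continuousOn_chainMap h0 hA hmem hc
        (fun σ => continuous_const.mul (continuous_tau σ)) continuousOn_const
        (fun y _ => hsorted _ 1 y)
        (fun y hy σ _ h => hA (hy σ (hmul 1 y σ h)) (hbase y₀))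
    refine (hc'.continuousAt (hev y₀)).congr ?_
    filter_upwards [hev y₀] with y hy
    have hF : ∀ σ, tau σ y ≠ 0 → σ ∈ (fsupp y₀).powerset :=
      fun σ h => Finset.mem_powerset.2 (hy σ h)
    rw [hG1 _ y hF _ (base y) (fun σ h => hA (hy σ h) (hbase y₀))
      (fun σ h => hA (hsub y σ h) (hbase y)), hGF y _ hF]
  have hGc : Continuous fun p : unitInterval × Carrier L A =>
      G (fsupp p.2.1.1).powerset p.1 p.2.1.1 p.2.1.2 := by
    rw [continuous_iff_continuousAt]
    rintro ⟨s₀, ⟨y₀, x₀⟩, h₀⟩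
    have hc' : ContinuousOn (fun p : unitInterval × Carrier L A =>
        G (fsupp y₀).powerset p.1 p.2.1.1 p.2.1.2) Set.univ :=
      continuousOn_chainMap h0 hA hmem hc
        (fun σ => continuous_fst.mul ((continuous_tau σ).comp (by fun_prop)))
        (by fun_prop) (fun p _ => hsorted _ p.1 p.2.1.1)
        (fun p _ σ _ h => hA (hsub p.2.1.1 σ (hmul p.1 _ σ h)) p.2.2)
    refine (hc'.continuousAt Filter.univ_mem).congr ?_
    have hcont : Continuous fun p : unitInterval × Carrier L A => p.2.1.1 := by fun_prop
    filter_upwards [hcont.continuousAt.eventually (hev y₀)] with p hp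
    exact hGF _ _ (fun σ h => Finset.mem_powerset.2 (hp σ h)) _ _
  -- the straight-line homotopy from the identity to `shrink`
  let lin : unitInterval × L.space → L.space := fun p =>
    ⟨_, segment_mem p.2 (shrink p.2) (fsupp_mem_faces p.2) subset_rfl
      (fsupp_shrink_subset p.2) p.1⟩
  have hlin : Continuous lin := by
    refine Continuous.subtype_mk (continuous_pi fun i => ?_) _
    have h1 : Continuous fun p : unitInterval × L.space => p.2.1 i :=
      (continuous_coord i).comp continuous_snd
    have h2 : Continuous fun p : unitInterval × L.space => (shrink p.2).1 i :=
      (continuous_coord i).comp (shrink.continuous.comp continuous_snd)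
    fun_prop
  have hlin0 : ∀ y, lin (0, y) = y := fun y => Subtype.ext (by simp [lin])
  have hlin1 : ∀ y, lin (1, y) = shrink y := fun y => Subtype.ext (by simp [lin])
  have hlins : ∀ t y, fsupp (lin (t, y)) ⊆ fsupp y := fun t y i hi => by
    by_contra h
    apply mem_fsupp.1 hi
    have h' : i ∉ fsupp (shrink y) := fun h' => h (fsupp_shrink_subset y h')
    simp [lin, notMem_fsupp.1 h, notMem_fsupp.1 h']
  let q : C(Carrier L A, L.space) := ⟨fun z => z.1.1, by fun_prop⟩
  let sec : C(L.space, Carrier L A) :=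
    ⟨fun y => ⟨(shrink y, g y), hGmem _ 1 y _ (hbase y)⟩,
      (shrink.continuous.prodMk hgc).subtype_mk _⟩
  let mid : C(Carrier L A, Carrier L A) :=
    ⟨fun z => ⟨(shrink z.1.1, z.1.2), hA (fsupp_shrink_subset _) z.2⟩,
      ((shrink.continuous.comp q.continuous).prodMk (by fun_prop)).subtype_mk _⟩
  have H1 : (ContinuousMap.id (Carrier L A)).Homotopic mid :=
    ⟨{  toFun p := ⟨(lin (p.1, p.2.1.1), p.2.1.2), hA (hlins _ _) p.2.2⟩
        continuous_toFun := ((hlin.comp (by fun_prop)).prodMk (by fun_prop)).subtype_mk _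
        map_zero_left z := by simp [hlin0]
        map_one_left z := by simp [hlin1, mid] }⟩
  have H2 : mid.Homotopic (sec.comp q) :=
    ⟨{  toFun p := ⟨(shrink p.2.1.1, G (fsupp p.2.1.1).powerset p.1 p.2.1.1 p.2.1.2),
          hGmem _ _ _ _ p.2.2⟩
        continuous_toFun := ((shrink.continuous.comp (by fun_prop)).prodMk hGc).subtype_mk _
        map_zero_left z := Subtype.ext (Prod.ext rfl (hG0 _ _ _))
        map_one_left z := Subtype.ext (Prod.ext rfl (hg_eq _ _ z.2)) }⟩
  have H3 : (ContinuousMap.id L.space).Homotopic (q.comp sec) :=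
    ⟨{  toFun := lin
        continuous_toFun := hlin
        map_zero_left := hlin0
        map_one_left := hlin1 }⟩
  exact ⟨⟨q, sec, (H1.trans H2).symm, H3.symm⟩⟩

end fiber

/-! ### The two projections in the nerve theorem -/

lemma isClosed_fsupp {W : Type*} {L : SCpx W} {P : Finset W → Prop}
    (hP : ∀ s t, s ⊆ t → P t → P s) : IsClosed {x : L.space | P (fsupp x)} := by
  rw [← isOpen_compl_iff, isOpen_iff_eventually]
  intro x₀ hx₀
  have : ∀ᶠ x : L.space in nhds x₀, ∀ i ∈ fsupp x₀, x.1 i ≠ 0 := by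
    rw [Filter.eventually_all_finset]
    exact fun i hi => (continuous_coord i).continuousAt.eventually_ne (mem_fsupp.1 hi)
  filter_upwards [this] with x hx hx'
  exact hx₀ (hP _ _ (fun i hi => mem_fsupp.2 (hx i hi)) hx')

section nerve

variable {ι V : Type*} {K : SCpx V} {U : ι → SCpx V}

/-- The points of `|K|` lying in all the `|U i|` with `i ∈ σ`. -/
def interSet (K : SCpx V) (U : ι → SCpx V) (σ : Finset ι) : Set K.space :=
  {x | ∀ i ∈ σ, fsupp x ∈ (U i).faces}

/-- The points of the realized nerve supported on members of the cover containing `t`. -/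
def coSet (U : ι → SCpx V) (t : Finset V) : Set (nerveCpx U).space :=
  {y | ∀ i ∈ fsupp y, t ∈ (U i).faces}

lemma contractible_interSet (hsub : ∀ i, (U i).faces ⊆ K.faces) {σ : Finset ι}
    (hσ : σ.Nonempty) (h : ContractibleSpace (interCpx U σ).space) :
    ContractibleSpace (interSet K U σ) := by
  obtain ⟨j, hj⟩ := hσ
  refine Homeomorph.contractibleSpace (Y := (interCpx U σ).space)
    { toFun := fun x => ⟨x.1.1, mem_space_of (L := interCpx U σ) (s := fsupp x.1) x.2
        (space_nonneg x.1) (fun i hi => mem_fsupp.2 hi) (sum_fsupp x.1)⟩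
      invFun := fun x => ⟨⟨x.1, mem_space_of (hsub j (fsupp_mem_faces x j hj))
        (space_nonneg x) (fun i hi => mem_fsupp.2 hi) (sum_fsupp x)⟩, fun i hi =>
          (U i).down_closed (fsupp_mem_faces x i hi) fun v hv =>
            mem_fsupp.2 (mem_fsupp.1 hv)⟩
      left_inv := fun x => rfl
      right_inv := fun x => rfl
      continuous_toFun := by fun_prop
      continuous_invFun := by fun_prop }

lemma contractible_coSet {t : Finset V} (ht : t.Nonempty) {j : ι} (hj : t ∈ (U j).faces) :
    ContractibleSpace (coSet U t) := by
  have hface : ∀ y ∈ coSet U t, insert j (fsupp y) ∈ (nerveCpx U).faces := fun y hy =>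
    ⟨t, ht, fun i hi => (Finset.mem_insert.1 hi).elim (fun h => h ▸ hj) (hy i)⟩
  let e : (nerveCpx U).space := ⟨Pi.single j 1, mem_space_of (s := {j})
    ⟨t, ht, fun i hi => Finset.mem_singleton.1 hi ▸ hj⟩
    (fun i => by by_cases h : i = j <;> simp [h])
    (fun i hi => by by_contra h; simp_all [Pi.single_apply]) (by simp)⟩
  have he : ∀ i, i ≠ j → e.1 i = 0 := fun i hi => by simp [e, hi]
  have hes : fsupp e ⊆ {j} := fun i hi => by
    by_contra h
    exact mem_fsupp.1 hi (he i (by simpa using h))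
  have hmem : e ∈ coSet U t := fun i hi => Finset.mem_singleton.1 (hes hi) ▸ hj
  refine (contractible_iff_id_nullhomotopic _).2 ⟨⟨e, hmem⟩, ⟨?_⟩⟩
  exact
    { toFun := fun p => ⟨⟨_, segment_mem p.2.1 e (hface _ p.2.2) (Finset.subset_insert _ _)
          (hes.trans (by simp)) p.1⟩, fun i hi => by
        by_cases hij : i = j
        · exact hij ▸ hj
        · refine p.2.2 i (mem_fsupp.2 fun h => mem_fsupp.1 hi ?_)
          simp [h, he i hij]⟩
      continuous_toFun := by
        refine Continuous.subtype_mk (Continuous.subtype_mk (continuous_pi fun i => ?_) _) _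
        have h1 : Continuous fun p : unitInterval × coSet U t => p.2.1.1 i :=
          (continuous_coord i).comp (by fun_prop)
        fun_prop
      map_zero_left := fun y => Subtype.ext (Subtype.ext (by simp))
      map_one_left := fun y => Subtype.ext (Subtype.ext (by simp)) }

end nerve

/-- Borsuk Nerve Theorem. Let `𝒰 = (U i)` be a cover of a simplicial
complex `K` by simplicial subcomplexes such that every finite non-empty intersection of
elements of `𝒰` has contractible geometric realization. Then the geometric realization of
the nerve of `𝒰` is homotopy equivalent to the geometric realization of `K`. -/
theorem borsuk_nerve_theorem {ι V : Type*} (K : SCpx V) (U : ι → SCpx V)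
    (hsub : ∀ i, (U i).faces ⊆ K.faces)
    (hcover : ∀ t ∈ K.faces, ∃ i, t ∈ (U i).faces)
    (hcontr : ∀ s : Finset ι, s.Nonempty →
      (∃ t : Finset V, t.Nonempty ∧ ∀ i ∈ s, t ∈ (U i).faces) →
      ContractibleSpace ((interCpx U s).space)) :
    Nonempty (ContinuousMap.HomotopyEquiv ((nerveCpx U).space) (K.space)) := by
  -- the same subspace of `|N| × |K|`, read as a carrier over either factor
  have hZ : ∀ (y : (nerveCpx U).space) (x : K.space),
      (y, x) ∈ Carrier (nerveCpx U) (interSet K U) ↔ (x, y) ∈ Carrier K (coSet U) :=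
    fun _ _ => Iff.rfl
  obtain ⟨e1⟩ := carrier_homotopyEquiv (L := nerveCpx U) (A := interSet K U)
    (fun s t hst x hx i hi => hx i (hst hi))
    (fun σ _ _ => isClosed_fsupp (P := fun t => ∀ i ∈ σ, t ∈ (U i).faces)
      fun s t hst ht i hi => (U i).down_closed (ht i hi) hst)
    (fun σ hσ hne => contractible_interSet hsub hne (hcontr σ hne hσ))
  obtain ⟨e2⟩ := carrier_homotopyEquiv (L := K) (A := coSet U)
    (fun s t hst y hy i hi => (U i).down_closed (hy i hi) hst)
    (fun t _ _ => isClosed_fsupp (P := fun σ => ∀ i ∈ σ, t ∈ (U i).faces)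
      fun _ _ hst ht i hi => ht i (hst hi))
    (fun t ht hne => by
      obtain ⟨j, hj⟩ := hcover t ht
      exact contractible_coSet hne hj)
  let sw : Carrier (nerveCpx U) (interSet K U) ≃ₜ Carrier K (coSet U) :=
    (Homeomorph.prodComm _ _).subtype fun p => hZ p.1 p.2
  exact ⟨(e1.symm.trans sw.toHomotopyEquiv).trans e2⟩
end

section
/- (Dowker's Theorem.) For every relation (R, X, Y), the geometric realizations |D(R)| and |D(R^T)| of the Dowker complexes of R and of its transpose are homotopy equivalent. Explicitly, if φ_R : |D(R)| → |E(R)| is any homotopy inverse of |π_R|, then the composite Ψ_R = |π_{R^T}| ∘ |S_R| ∘ φ_R : |D(R)| → |D(R^T)| is a homotopy equivalence. -/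
/-!
The topology on `K.space` is that of pointwise convergence of barycentric coordinates. On `K.space`
pointwise convergence is uniform (`eventually_close`), so `K.space` is (pseudo)metrizable, hence
paracompact, and partitions of unity are available. A partition of unity indexed by the vertices
of `K` is a continuous map into `K.space` as soon as at every point the nonzero members span a
simplex, and two maps into `K.space` whose values always lie in a common simplex are homotopic
along straight lines.

The heart of the matter is that `π = |π_R| : |E(R)| → |D(R)|` is a homotopy equivalence. There is a
positive continuous function `c` on `|D(R)|` with `c f < max f`; near any `f₀`, the truncated
support `{x | c f < f x}` is contained in the support of `f₀`. Let `g : |D(R)| → |E(R)|` be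
given by a partition of unity subordinate to the sets of those `f` for which `c f < f x` and, in a
neighbourhood of `f`, the truncated support consists of elements related to `y`. Then `π ∘ g`
moves points only within the simplex spanned by their support, so `π ∘ g ≃ id`. The map `g ∘ π` need
not be contiguous to the identity, but both are contiguous to an intermediate map `q`, given
by a partition of unity subordinate to the sets of those `p` with `p (x, y) > 0` and
`c (π p) < (π p) x`.

Applying this to the transpose relation, `Ψ_R` is a composite of three homotopy equivalences.
-/

open scoped Classical

open Topology

/-! ### The topology of the geometric realization -/

section Realization

variable {V : Type*} {K : SCpx V}

lemma SCpx.finsum_eq (f : V → ℝ) (s : Finset V) (h : ∀ v, f v ≠ 0 → v ∈ s) :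
    ∑ᶠ v, f v = ∑ v ∈ s, f v :=
  finsum_eq_sum_of_support_subset f fun v hv => h v hv

lemma SCpx.sum_le_one (f : K.space) (s : Finset V) : ∑ v ∈ s, (f : V → ℝ) v ≤ 1 := by
  obtain ⟨t, -, ht⟩ := f.2.2.1
  have h1 := f.2.2.2
  rw [SCpx.finsum_eq _ (t ∪ s) fun v hv => Finset.mem_union_left _ (ht v hv)] at h1
  exact h1 ▸ Finset.sum_le_sum_of_subset_of_nonneg Finset.subset_union_right fun v _ _ => f.2.1 v

lemma SCpx.exists_pos (f : K.space) : ∃ v, 0 < (f : V → ℝ) v := by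
  by_contra! h
  have h1 := f.2.2.2
  rw [finsum_eq_zero_of_forall_eq_zero fun v => le_antisymm (h v) (f.2.1 v)] at h1
  exact zero_ne_one h1

lemma SCpx.continuous_coord (v : V) : Continuous fun f : K.space => (f : V → ℝ) v :=
  (continuous_apply v).comp continuous_subtype_val

/-- Pointwise convergence in `K.space` is uniform: the coordinates on the support of the limit
already account for almost all of the total mass `1`. -/
lemma SCpx.eventually_close (f₀ : K.space) {ε : ℝ} (hε : 0 < ε) :
    ∀ᶠ f : K.space in 𝓝 f₀, ∀ v, |(f : V → ℝ) v - (f₀ : V → ℝ) v| < ε := by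
  obtain ⟨s, -, hs⟩ := f₀.2.2.1
  have h1 : ∑ v ∈ s, (f₀ : V → ℝ) v = 1 := by rw [← SCpx.finsum_eq _ s hs]; exact f₀.2.2.2
  have hc : Continuous fun f : K.space => ∑ v ∈ s, (f : V → ℝ) v :=
    continuous_finsetSum _ fun v _ => SCpx.continuous_coord v
  have e1 : ∀ᶠ f : K.space in 𝓝 f₀, 1 - ε < ∑ v ∈ s, (f : V → ℝ) v :=
    hc.continuousAt.eventually_const_lt (by simp only [h1]; linarith)
  have e2 : ∀ᶠ f : K.space in 𝓝 f₀, ∀ v ∈ s, |(f : V → ℝ) v - (f₀ : V → ℝ) v| < ε := by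
    rw [Filter.eventually_all_finset]
    intro v _
    have : Continuous fun f : K.space => |(f : V → ℝ) v - (f₀ : V → ℝ) v| :=
      ((SCpx.continuous_coord v).sub continuous_const).abs
    exact this.continuousAt.eventually_lt_const (by simpa using hε)
  filter_upwards [e1, e2] with f h2 h3 v
  by_cases hv : v ∈ s
  · exact h3 v hv
  · have h4 : (f₀ : V → ℝ) v = 0 := by
      by_contra h
      exact hv (hs v h)
    have h5 := SCpx.sum_le_one f (insert v s)
    rw [Finset.sum_insert hv] at h5
    rw [h4, sub_zero, abs_of_nonneg (f.2.1 v)]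
    linarith

lemma SCpx.isInducing_uniformFun :
    IsInducing fun f : K.space => UniformFun.ofFun (f : V → ℝ) := by
  rw [isInducing_iff_nhds]
  intro f₀
  apply le_antisymm
  · rw [← Filter.tendsto_iff_comap, UniformFun.tendsto_iff_tendstoUniformly,
      Metric.tendstoUniformly_iff]
    intro ε hε
    filter_upwards [SCpx.eventually_close f₀ hε] with f hf v
    rw [dist_comm]
    exact hf v
  · rw [nhds_subtype_eq_comap]
    have hc : Continuous fun g : UniformFun V ℝ => UniformFun.toFun g :=
      UniformFun.uniformContinuous_toFun.continuous
    have h := (hc.tendsto (UniformFun.ofFun (f₀ : V → ℝ)))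
    rw [Filter.tendsto_iff_comap] at h
    have h' := Filter.comap_mono (m := fun f : K.space => UniformFun.ofFun (f : V → ℝ)) h
    rwa [Filter.comap_comap] at h'

instance SCpx.paracompactSpace_space : ParacompactSpace K.space := by
  have h := (SCpx.isInducing_uniformFun (K := K)).eq_induced
  let m : PseudoEMetricSpace K.space :=
    PseudoEMetricSpace.induced (fun f : K.space => UniformFun.ofFun (f : V → ℝ)) inferInstance
  have hp : @ParacompactSpace K.space m.toUniformSpace.toTopologicalSpace :=
    inferInstance
  rw [h]
  exact hp

/-! ### Maps into a geometric realization -/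

/-- The map into `|K|` whose barycentric coordinates are the members of a partition of unity
indexed by the vertices of `K`. -/
noncomputable def SCpx.ofPartition {Z : Type*} [TopologicalSpace Z] (ρ : PartitionOfUnity V Z)
    (h : ∀ z, ∃ s ∈ K.faces, ∀ v, ρ v z ≠ 0 → v ∈ s) : C(Z, K.space) where
  toFun z := ⟨fun v => ρ v z, fun v => ρ.nonneg v z, h z, ρ.sum_eq_one (Set.mem_univ z)⟩
  continuous_toFun :=
    Continuous.subtype_mk (continuous_pi fun v => (ρ v).continuous) _

/-- Contiguous maps into `|K|` are homotopic along straight lines. -/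
lemma SCpx.homotopic_of_contiguous {Z : Type*} [TopologicalSpace Z] (a b : C(Z, K.space))
    (h : ∀ z, ∃ s ∈ K.faces, ∀ v, (a z : V → ℝ) v ≠ 0 ∨ (b z : V → ℝ) v ≠ 0 → v ∈ s) :
    a.Homotopic b := by
  have hmem : ∀ x : unitInterval × Z,
      (fun v => (1 - (x.1 : ℝ)) * (a x.2 : V → ℝ) v + (x.1 : ℝ) * (b x.2 : V → ℝ) v)
        ∈ K.space := by
    rintro ⟨t, z⟩
    obtain ⟨s, hs, hv⟩ := h z
    have hv' : ∀ v, (1 - (t : ℝ)) * (a z : V → ℝ) v + (t : ℝ) * (b z : V → ℝ) v ≠ 0 → v ∈ s := by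
      intro v hne
      apply hv
      by_contra! h0
      exact hne (by rw [h0.1, h0.2]; ring)
    refine ⟨fun v => ?_, ⟨s, hs, hv'⟩, ?_⟩
    · exact add_nonneg (mul_nonneg (sub_nonneg.2 t.2.2) ((a z).2.1 v))
        (mul_nonneg t.2.1 ((b z).2.1 v))
    · have ha := (a z).2.2.2
      have hb := (b z).2.2.2
      rw [SCpx.finsum_eq _ s fun v hne => hv v (Or.inl hne)] at ha
      rw [SCpx.finsum_eq _ s fun v hne => hv v (Or.inr hne)] at hb
      rw [SCpx.finsum_eq _ s hv', Finset.sum_add_distrib, ← Finset.mul_sum, ← Finset.mul_sum,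
        ha, hb]
      ring
  refine ⟨⟨⟨fun x => ⟨_, hmem x⟩, ?_⟩, ?_, ?_⟩⟩
  · refine Continuous.subtype_mk (continuous_pi fun v => ?_) _
    have h1 : Continuous fun x : unitInterval × Z => (x.1 : ℝ) :=
      continuous_subtype_val.comp continuous_fst
    exact ((continuous_const.sub h1).mul
      ((SCpx.continuous_coord v).comp (a.continuous.comp continuous_snd))).add
      (h1.mul ((SCpx.continuous_coord v).comp (b.continuous.comp continuous_snd)))
  · intro z
    ext v
    simp
  · intro z
    ext v
    simp

/-- The induced map on realizations acts on supports as the vertex map does; there is no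
cancellation because coordinates are nonnegative. -/
lemma SCpx.pushforward_ne_zero_iff {V' : Type*} (F : V → V') (p : K.space) (w : V') :
    pushforward F (p : V → ℝ) w ≠ 0 ↔ ∃ v, F v = w ∧ (p : V → ℝ) v ≠ 0 := by
  obtain ⟨s, -, hs⟩ := p.2.2.1
  have heq : pushforward F (p : V → ℝ) w = ∑ v ∈ s with F v = w, (p : V → ℝ) v := by
    unfold pushforward
    apply finsum_mem_eq_sum_of_inter_support_eq
    ext v
    simp only [Set.mem_inter_iff, Set.mem_preimage, Set.mem_singleton_iff, Function.mem_support,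
      Finset.coe_filter, Set.mem_ofPred_eq]
    exact ⟨fun h => ⟨⟨hs v h.2, h.1⟩, h.2⟩, fun h => ⟨h.1.2, h.2⟩⟩
  rw [heq, Ne, Finset.sum_eq_zero_iff_of_nonneg fun v _ => p.2.1 v]
  push Not
  constructor
  · rintro ⟨v, hv, hne⟩
    exact ⟨v, (Finset.mem_filter.1 hv).2, hne⟩
  · rintro ⟨v, hv, hne⟩
    exact ⟨v, Finset.mem_filter.2 ⟨hs v hne, hv⟩, hne⟩

/-- A continuous positive threshold lying strictly below the largest barycentric coordinate. -/
lemma SCpx.exists_threshold (K : SCpx V) :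
    ∃ c : C(K.space, ℝ), ∀ f, 0 < c f ∧ ∃ v, c f < (f : V → ℝ) v := by
  refine exists_continuous_forall_mem_convex_of_local_const
    (t := fun f : K.space => {r : ℝ | 0 < r ∧ ∃ v, r < (f : V → ℝ) v}) (fun f => ?_) fun f₀ => ?_
  · apply Set.OrdConnected.convex
    refine ⟨?_⟩
    rintro a ⟨ha, -⟩ b ⟨-, v, hb⟩ r ⟨har, hrb⟩
    exact ⟨ha.trans_le har, v, hrb.trans_lt hb⟩
  · obtain ⟨v, hv⟩ := SCpx.exists_pos f₀
    refine ⟨(f₀ : V → ℝ) v / 2, ?_⟩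
    filter_upwards [(SCpx.continuous_coord v).continuousAt.eventually_const_lt (half_lt_self hv)]
      with f hf
    exact ⟨half_pos hv, v, hf⟩

/-- Truncated supports are upper semicontinuous: near `f₀` they lie in the support of `f₀`. -/
lemma SCpx.eventually_truncated_support (c : C(K.space, ℝ)) (hc : ∀ f, 0 < c f) (f₀ : K.space) :
    ∀ᶠ f : K.space in 𝓝 f₀, ∀ v, c f < (f : V → ℝ) v → (f₀ : V → ℝ) v ≠ 0 := by
  have h := half_pos (hc f₀)
  filter_upwards [SCpx.eventually_close f₀ h,
    c.continuous.continuousAt.eventually_const_lt (half_lt_self (hc f₀))] with f h1 h2 v hv h0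
  have h3 := (abs_lt.1 (h1 v)).2
  rw [h0] at h3
  linarith

end Realization

/-! ### The projection from the rectangle complex -/

section Rectangle

variable {X Y : Type*}

/-- Points of `|E(R)|` are supported on rectangles contained in `R`. -/
lemma rect_mem_of_ne_zero {R : Set (X × Y)} (p : (rect R).space) {a b : X × Y}
    (ha : (p : X × Y → ℝ) a ≠ 0) (hb : (p : X × Y → ℝ) b ≠ 0) : (a.1, b.2) ∈ R := by
  obtain ⟨s, hs, hv⟩ := p.2.2.1
  exact hs a (hv a ha) b (hv b hb)

lemma isHomotopyEquivMap_rect_fst (R : Set (X × Y)) (pE : C((rect R).space, (dowker R).space))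
    (hpE : RealizesMap (rect R) (dowker R) Prod.fst pE) : IsHomotopyEquivMap pE := by
  have hsupp : ∀ (p : (rect R).space) x,
      (pE p : X → ℝ) x ≠ 0 ↔ ∃ y, (p : X × Y → ℝ) (x, y) ≠ 0 := by
    intro p x
    rw [hpE p, SCpx.pushforward_ne_zero_iff]
    constructor
    · rintro ⟨⟨x', y⟩, rfl, h⟩
      exact ⟨y, h⟩
    · rintro ⟨y, h⟩
      exact ⟨(x, y), rfl, h⟩
  obtain ⟨c, hc⟩ := SCpx.exists_threshold (dowker R)
  let W : Y → Set (dowker R).space := fun y =>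
    interior {f | ∀ x, c f < (f : X → ℝ) x → (x, y) ∈ R}
  let U : X × Y → Set (dowker R).space := fun v => {f | c f < (f : X → ℝ) v.1} ∩ W v.2
  have hUo : ∀ v, IsOpen (U v) := fun v =>
    (isOpen_lt c.continuous (SCpx.continuous_coord v.1)).inter isOpen_interior
  have hUc : Set.univ ⊆ ⋃ v, U v := by
    intro f _
    obtain ⟨x, hx⟩ := (hc f).2
    obtain ⟨s, ⟨y, hy⟩, hs⟩ := f.2.2.1
    refine Set.mem_iUnion.2 ⟨(x, y), hx, mem_interior_iff_mem_nhds.2 ?_⟩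
    filter_upwards [SCpx.eventually_truncated_support c (fun f => (hc f).1) f] with f' hf' x' hx'
    exact hy x' (hs x' (hf' x' hx'))
  have hUR : ∀ f a b, f ∈ U b → c f < (f : X → ℝ) a → (a, b.2) ∈ R := fun f a b hb ha =>
    (interior_subset hb.2 : _) a ha
  obtain ⟨ρ, hρ⟩ := PartitionOfUnity.exists_isSubordinate isClosed_univ U hUo hUc
  have hρU : ∀ v f, ρ v f ≠ 0 → f ∈ U v := fun v f h => hρ v (subset_tsupport _ h)
  let g : C((dowker R).space, (rect R).space) := SCpx.ofPartition ρ fun f => by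
    refine ⟨ρ.finsupport f, ?_, fun v hv => (ρ.mem_finsupport f).2 hv⟩
    intro a ha b hb
    exact hUR f a.1 b (hρU b f ((ρ.mem_finsupport f).1 hb))
      (hρU a f ((ρ.mem_finsupport f).1 ha)).1
  have hgU : ∀ v f, (g f : X × Y → ℝ) v ≠ 0 → f ∈ U v := hρU
  let U' : X × Y → Set (rect R).space := fun v =>
    {p | 0 < (p : X × Y → ℝ) v} ∩ {p | c (pE p) < (pE p : X → ℝ) v.1}
  have hUo' : ∀ v, IsOpen (U' v) := fun v =>
    (isOpen_lt continuous_const (SCpx.continuous_coord v)).inter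
      (isOpen_lt (c.continuous.comp pE.continuous)
        ((SCpx.continuous_coord v.1).comp pE.continuous))
  have hUc' : Set.univ ⊆ ⋃ v, U' v := by
    intro p _
    obtain ⟨x, hx⟩ := (hc (pE p)).2
    obtain ⟨y, hy⟩ := (hsupp p x).1 ((hc (pE p)).1.trans hx).ne'
    exact Set.mem_iUnion.2 ⟨(x, y), lt_of_le_of_ne (p.2.1 _) (Ne.symm hy), hx⟩
  obtain ⟨σ, hσ⟩ := PartitionOfUnity.exists_isSubordinate isClosed_univ U' hUo' hUc'
  have hσU : ∀ v p, σ v p ≠ 0 → p ∈ U' v := fun v p h => hσ v (subset_tsupport _ h)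
  let q : C((rect R).space, (rect R).space) := SCpx.ofPartition σ fun p => by
    obtain ⟨s, hs, hv⟩ := p.2.2.1
    exact ⟨s, hs, fun v h => hv v (hσU v p h).1.ne'⟩
  have hqU : ∀ v p, (q p : X × Y → ℝ) v ≠ 0 → p ∈ U' v := hσU
  refine ⟨g, ?_, ?_⟩
  · apply SCpx.homotopic_of_contiguous
    intro f
    obtain ⟨s, hs, hv⟩ := f.2.2.1
    refine ⟨s, hs, ?_⟩
    rintro x (hx | hx)
    · obtain ⟨y, hy⟩ := (hsupp (g f) x).1 hx
      exact hv x ((hc f).1.trans (hgU _ f hy).1).ne'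
    · exact hv x hx
  · have h1 : (g.comp pE).Homotopic q := by
      apply SCpx.homotopic_of_contiguous
      intro p
      obtain ⟨s, -, hs⟩ := (g (pE p)).2.2.1
      obtain ⟨t, -, ht⟩ := (q p).2.2.1
      -- Both kinds of vertices have first coordinate in the truncated support of `pE p`.
      have key : ∀ v, (g (pE p) : X × Y → ℝ) v ≠ 0 ∨ (q p : X × Y → ℝ) v ≠ 0 →
          c (pE p) < (pE p : X → ℝ) v.1 := by
        rintro v (hv | hv)
        · exact (hgU v _ hv).1
        · exact (hqU v _ hv).2
      refine ⟨{v ∈ s ∪ t | (g (pE p) : X × Y → ℝ) v ≠ 0 ∨ (q p : X × Y → ℝ) v ≠ 0}, ?_, ?_⟩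
      · intro a ha b hb
        have ha' := key a (Finset.mem_filter.1 ha).2
        rcases (Finset.mem_filter.1 hb).2 with hb' | hb'
        · exact hUR _ _ _ (hgU b _ hb') ha'
        · obtain ⟨y, hy⟩ := (hsupp p a.1).1 ((hc (pE p)).1.trans ha').ne'
          exact rect_mem_of_ne_zero p (a := (a.1, y)) hy (hqU b _ hb').1.ne'
      · intro v hv
        refine Finset.mem_filter.2 ⟨Finset.mem_union.2 ?_, hv⟩
        exact hv.imp (hs v) (ht v)
    refine h1.trans (SCpx.homotopic_of_contiguous _ _ fun p => ?_)
    obtain ⟨s, hs, hv⟩ := p.2.2.1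
    refine ⟨s, hs, ?_⟩
    rintro v (h | h)
    · exact hv v (hqU v p h).1.ne'
    · exact hv v h

lemma pushforward_swap (p : X × Y → ℝ) (w : Y × X) : pushforward Prod.swap p w = p w.swap := by
  have h : (Prod.swap ⁻¹' {w} : Set (X × Y)) = {w.swap} := by
    ext v
    simp [Prod.swap_eq_iff_eq_swap]
  unfold pushforward
  rw [h, finsum_mem_singleton]

/-- Relabelling coordinates by `Prod.swap`, as a continuous map `|E(Rᵀ)| → |E(R)|`. -/
noncomputable def rectSwap (R : Set (X × Y)) : C((rect (transpose R)).space, (rect R).space) where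
  toFun p := ⟨fun v => (p : Y × X → ℝ) v.swap, fun v => p.2.1 _, by
    obtain ⟨s, hs, hv⟩ := p.2.2.1
    refine ⟨s.image Prod.swap, ?_, fun v h => Finset.mem_image.2 ⟨_, hv _ h, v.swap_swap⟩⟩
    intro a ha b hb
    obtain ⟨a', ha', rfl⟩ := Finset.mem_image.1 ha
    obtain ⟨b', hb', rfl⟩ := Finset.mem_image.1 hb
    exact hs b' hb' a' ha', by
    rw [← p.2.2.2]
    exact finsum_comp_equiv (Equiv.prodComm X Y)⟩
  continuous_toFun :=
    Continuous.subtype_mk (continuous_pi fun v : X × Y => SCpx.continuous_coord v.swap) _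

lemma isHomotopyEquivMap_rect_swap (R : Set (X × Y))
    (sR : C((rect R).space, (rect (transpose R)).space))
    (hsR : RealizesMap (rect R) (rect (transpose R)) Prod.swap sR) : IsHomotopyEquivMap sR := by
  have h : ∀ p v, (sR p : Y × X → ℝ) v = (p : X × Y → ℝ) v.swap := fun p v => by
    rw [hsR p, pushforward_swap]
  refine ⟨rectSwap R, ?_, ?_⟩
  · have : sR.comp (rectSwap R) = ContinuousMap.id _ := by
      ext p v
      exact h (rectSwap R p) v
    rw [this]
  · have : (rectSwap R).comp sR = ContinuousMap.id _ := by
      ext p v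
      exact h p v.swap
    rw [this]

end Rectangle

lemma IsHomotopyEquivMap.comp {A B C : Type*} [TopologicalSpace A] [TopologicalSpace B]
    [TopologicalSpace C] {g : C(B, C)} {f : C(A, B)} (hg : IsHomotopyEquivMap g)
    (hf : IsHomotopyEquivMap f) : IsHomotopyEquivMap (g.comp f) := by
  obtain ⟨g', hg1, hg2⟩ := hg
  obtain ⟨f', hf1, hf2⟩ := hf
  refine ⟨f'.comp g', ?_, ?_⟩
  · have h : (g.comp ((f.comp f').comp g')).Homotopic (g.comp ((ContinuousMap.id B).comp g')) :=
      .comp (.refl g) (.comp hf1 (.refl g'))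
    exact h.trans hg1
  · have h : (f'.comp ((g'.comp g).comp f)).Homotopic (f'.comp ((ContinuousMap.id B).comp f)) :=
      .comp (.refl f') (.comp hg2 (.refl f))
    exact h.trans hf2

/-- Dowker's Theorem. For every relation `(R, X, Y)`: if
`pE = |π_R| : |E(R)| → |D(R)|`, `sR = |S_R| : |E(R)| → |E(R^T)|` and
`pT = |π_{R^T}| : |E(R^T)| → |D(R^T)|` are the induced continuous maps, and
`φ : |D(R)| → |E(R)|` is any homotopy inverse of `|π_R|`, then the composite
`Ψ_R = |π_{R^T}| ∘ |S_R| ∘ φ : |D(R)| → |D(R^T)|` is a homotopy equivalence; in particular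
`|D(R)|` and `|D(R^T)|` are homotopy equivalent. -/
theorem dowker_theorem {X Y : Type*} (R : Set (X × Y))
    (pE : C((rect R).space, (dowker R).space))
    (hpE : RealizesMap (rect R) (dowker R) Prod.fst pE)
    (sR : C((rect R).space, (rect (transpose R)).space))
    (hsR : RealizesMap (rect R) (rect (transpose R)) Prod.swap sR)
    (pT : C((rect (transpose R)).space, (dowker (transpose R)).space))
    (hpT : RealizesMap (rect (transpose R)) (dowker (transpose R)) Prod.fst pT)
    (φ : C((dowker R).space, (rect R).space))
    (hφ₁ : (pE.comp φ).Homotopic (ContinuousMap.id _))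
    (hφ₂ : (φ.comp pE).Homotopic (ContinuousMap.id _)) :
    IsHomotopyEquivMap (pT.comp (sR.comp φ)) ∧
    Nonempty (ContinuousMap.HomotopyEquiv ((dowker R).space) ((dowker (transpose R)).space)) := by
  have h : IsHomotopyEquivMap (pT.comp (sR.comp φ)) :=
    (isHomotopyEquivMap_rect_fst (transpose R) pT hpT).comp
      ((isHomotopyEquivMap_rect_swap R sR hsR).comp ⟨pE, hφ₂, hφ₁⟩)
  refine ⟨h, ?_⟩
  obtain ⟨g, h1, h2⟩ := h
  exact ⟨⟨_, g, h2, h1⟩⟩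
end
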